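/- arXiv:1811.12588 — 2 statements merged into one kernel-verified Lean document; each statement's English description precedes it below -/
import Mathlib

section
/- Let R be a presilting subcategory of C and X a subcategory of C contained in R∗R[1]. Then the following are equivalent: (a) X is an R[1]-rigid subcategory; (b) X is a rigid subcategory; (c) X is a presilting subcategory. -/
/-!
Setting: `C` is a Hom-finite Krull–Schmidt `k`-linear triangulated category over an
algebraically closed field `k` (Krull–Schmidt is encoded as Hom-finiteness together with
idempotent completeness). Subcategories are identified with their classes of objects and
are always assumed full, closed under isomorphisms, direct sums and direct summands.
-/

open CategoryTheory CategoryTheory.Limits CategoryTheory.Pretriangulated Opposite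

universe v u

variable {C : Type u} [Category.{v} C] [Preadditive C] [HasZeroObject C] [HasShift C ℤ]
  [∀ n : ℤ, (shiftFunctor C n).Additive] [Pretriangulated C]

/-- `Y` is a direct summand (retract) of `X`. -/
def IsRetractOf {D : Type*} [Category D] (Y X : D) : Prop :=
  ∃ (s : Y ⟶ X) (r : X ⟶ Y), s ≫ r = 𝟙 Y

/-- `S` is a direct sum (biproduct) of `F` and `G`. -/
def IsDirectSumOf {D : Type*} [Category D] [Preadditive D] (S F G : D) : Prop :=
  ∃ (i : F ⟶ S) (j : G ⟶ S) (p : S ⟶ F) (q : S ⟶ G),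
    i ≫ p = 𝟙 F ∧ j ≫ q = 𝟙 G ∧ i ≫ q = 0 ∧ j ≫ p = 0 ∧ p ≫ i + q ≫ j = 𝟙 S

/-- A subcategory of an additive category, identified with its class of objects:
closed under isomorphisms, finite direct sums and direct summands. -/
def IsSubcat {D : Type*} [Category D] [Preadditive D] (S : Set D) : Prop :=
  (∀ ⦃X Y : D⦄, (X ≅ Y) → X ∈ S → Y ∈ S) ∧
  (∀ ⦃F G T : D⦄, F ∈ S → G ∈ S → IsDirectSumOf T F G → T ∈ S) ∧
  (∀ ⦃X Y : D⦄, X ∈ S → IsRetractOf Y X → Y ∈ S)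

/-- `f : X ⟶ A` is a right `𝓧`-approximation of `A`:
every map `X' ⟶ A` with `X' ∈ 𝓧` factors through `f`. -/
def IsRightApprox {D : Type*} [Category D] (𝓧 : Set D) {X A : D} (f : X ⟶ A) : Prop :=
  ∀ X' ∈ 𝓧, ∀ g : X' ⟶ A, ∃ h : X' ⟶ X, h ≫ f = g

/-- `f : A ⟶ X` is a left `𝓧`-approximation of `A`:
every map `A ⟶ X'` with `X' ∈ 𝓧` factors through `f`. -/
def IsLeftApprox {D : Type*} [Category D] (𝓧 : Set D) {A X : D} (f : A ⟶ X) : Prop :=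
  ∀ X' ∈ 𝓧, ∀ g : A ⟶ X', ∃ h : X ⟶ X', f ≫ h = g

/-- `𝓧` is contravariantly finite: every object admits a right `𝓧`-approximation. -/
def ContravariantlyFinite {D : Type*} [Category D] (𝓧 : Set D) : Prop :=
  ∀ A : D, ∃ X ∈ 𝓧, ∃ f : X ⟶ A, IsRightApprox 𝓧 f

/-- `𝓧` is covariantly finite: every object admits a left `𝓧`-approximation. -/
def CovariantlyFinite {D : Type*} [Category D] (𝓧 : Set D) : Prop :=
  ∀ A : D, ∃ X ∈ 𝓧, ∃ f : A ⟶ X, IsLeftApprox 𝓧 f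

/-- `𝓧` is functorially finite. -/
def FunctoriallyFinite {D : Type*} [Category D] (𝓧 : Set D) : Prop :=
  ContravariantlyFinite 𝓧 ∧ CovariantlyFinite 𝓧

/-- `𝓧 ∨ add M`: the smallest subcategory containing `𝓧` and `M`. -/
def veeAdd {D : Type*} [Category D] [Preadditive D] (𝓧 : Set D) (M : D) : Set D :=
  ⋂₀ {T : Set D | IsSubcat T ∧ 𝓧 ⊆ T ∧ M ∈ T}

/-- The shift `𝓢⟦n⟧` of a subcategory (closed under isomorphism). -/
def shiftSet (𝓢 : Set C) (n : ℤ) : Set C := {Y | ∃ X ∈ 𝓢, Nonempty (Y ≅ X⟦n⟧)}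

/-- `𝓐 ∗ 𝓑`: the class of objects `M` admitting a distinguished triangle
`A → M → B → A⟦1⟧` with `A ∈ 𝓐` and `B ∈ 𝓑`. -/
def starSet (𝓐 𝓑 : Set C) : Set C :=
  {M | ∃ A ∈ 𝓐, ∃ B ∈ 𝓑, ∃ (f : A ⟶ M) (g : M ⟶ B) (h : B ⟶ A⟦(1:ℤ)⟧),
    Triangle.mk f g h ∈ distTriang C}

/-- `𝓡 ∗ 𝓡[1]`, the class of two-term objects with respect to `𝓡`. -/
def twoTerm (𝓡 : Set C) : Set C := starSet 𝓡 (shiftSet 𝓡 1)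

/-- `𝓡` is rigid: `Hom(R, R'[1]) = 0` for all `R, R' ∈ 𝓡`. -/
def IsRigidSubcat (𝓡 : Set C) : Prop :=
  ∀ R ∈ 𝓡, ∀ R' ∈ 𝓡, ∀ φ : R ⟶ R'⟦(1:ℤ)⟧, φ = 0

/-- `φ` lies in the ideal `[𝓡[1]]` of morphisms factoring through an object of `𝓡⟦1⟧`. -/
def InShiftIdeal (𝓡 : Set C) {A B : C} (φ : A ⟶ B) : Prop :=
  ∃ R ∈ 𝓡, ∃ (a : A ⟶ R⟦(1:ℤ)⟧) (b : R⟦(1:ℤ)⟧ ⟶ B), φ = a ≫ b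

/-- `𝓧` is `𝓡[1]`-rigid: `[𝓡[1]](𝓧, 𝓧[1]) = 0`. -/
def IsRelRigid (𝓡 𝓧 : Set C) : Prop :=
  ∀ X ∈ 𝓧, ∀ X' ∈ 𝓧, ∀ φ : X ⟶ X'⟦(1:ℤ)⟧, InShiftIdeal 𝓡 φ → φ = 0

/-- `[𝓡[1]](M, 𝓧[1]) = 0`. -/
def relOrthTo (𝓡 𝓧 : Set C) (M : C) : Prop :=
  ∀ X ∈ 𝓧, ∀ φ : M ⟶ X⟦(1:ℤ)⟧, InShiftIdeal 𝓡 φ → φ = 0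

/-- `[𝓡[1]](𝓧, M[1]) = 0`. -/
def relOrthFrom (𝓡 𝓧 : Set C) (M : C) : Prop :=
  ∀ X ∈ 𝓧, ∀ φ : X ⟶ M⟦(1:ℤ)⟧, InShiftIdeal 𝓡 φ → φ = 0

/-- `𝓧 ⊆ 𝓡 ∗ 𝓡[1]` is two-term maximal `𝓡[1]`-rigid: it is `𝓡[1]`-rigid and for every
`M ∈ 𝓡 ∗ 𝓡[1]`, `[𝓡[1]](𝓧 ∨ add M, (𝓧 ∨ add M)[1]) = 0` implies `M ∈ 𝓧`. -/
def IsTwoTermMaxRelRigid (𝓡 𝓧 : Set C) : Prop :=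
  𝓧 ⊆ twoTerm 𝓡 ∧ IsRelRigid 𝓡 𝓧 ∧
  ∀ M ∈ twoTerm 𝓡, IsRelRigid 𝓡 (veeAdd 𝓧 M) → M ∈ 𝓧

/-- `𝓧 ⊆ 𝓡 ∗ 𝓡[1]` is two-term weak `𝓡[1]`-cluster tilting: `𝓡 ⊆ 𝓧[-1] ∗ 𝓧` and
`𝓧 = {M ∈ 𝓡 ∗ 𝓡[1] : [𝓡[1]](M, 𝓧[1]) = 0 and [𝓡[1]](𝓧, M[1]) = 0}`. -/
def IsTwoTermWeakRelCT (𝓡 𝓧 : Set C) : Prop :=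
  𝓧 ⊆ twoTerm 𝓡 ∧
  (∀ R ∈ 𝓡, R ∈ starSet (shiftSet 𝓧 (-1)) 𝓧) ∧
  (∀ M : C, M ∈ 𝓧 ↔ M ∈ twoTerm 𝓡 ∧ relOrthTo 𝓡 𝓧 M ∧ relOrthFrom 𝓡 𝓧 M)

/-- `𝓧 ⊆ 𝓡 ∗ 𝓡[1]` is two-term `𝓡[1]`-cluster tilting: `𝓧` is contravariantly finite and
`𝓧 = {M ∈ 𝓡 ∗ 𝓡[1] : [𝓡[1]](M, 𝓧[1]) = 0 and [𝓡[1]](𝓧, M[1]) = 0}`. -/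
def IsTwoTermRelCT (𝓡 𝓧 : Set C) : Prop :=
  𝓧 ⊆ twoTerm 𝓡 ∧ ContravariantlyFinite 𝓧 ∧
  (∀ M : C, M ∈ 𝓧 ↔ M ∈ twoTerm 𝓡 ∧ relOrthTo 𝓡 𝓧 M ∧ relOrthFrom 𝓡 𝓧 M)

/-- `𝓢` is presilting: `Hom(S, S'⟦i⟧) = 0` for all `S, S' ∈ 𝓢` and `i > 0`. -/
def IsPresilting (𝓢 : Set C) : Prop :=
  ∀ S ∈ 𝓢, ∀ S' ∈ 𝓢, ∀ i : ℤ, 0 < i → ∀ φ : S ⟶ S'⟦i⟧, φ = 0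

/-- A thick subcategory: closed under isomorphisms, shifts, cones and direct summands. -/
def IsThickSubcat (S : Set C) : Prop :=
  (∀ ⦃X Y : C⦄, (X ≅ Y) → X ∈ S → Y ∈ S) ∧
  (∀ X ∈ S, ∀ n : ℤ, X⟦n⟧ ∈ S) ∧
  (∀ T : Triangle C, T ∈ (distTriang C) → T.obj₁ ∈ S → T.obj₂ ∈ S → T.obj₃ ∈ S) ∧
  (∀ ⦃X Y : C⦄, X ∈ S → IsRetractOf Y X → Y ∈ S)

/-- `thick 𝓢`: the smallest thick subcategory containing `𝓢`. -/
def thickClosure (𝓢 : Set C) : Set C := ⋂₀ {T | IsThickSubcat T ∧ 𝓢 ⊆ T}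

/-- `𝓢` is silting: presilting and `thick 𝓢 = C`. -/
def IsSilting (𝓢 : Set C) : Prop := IsPresilting 𝓢 ∧ thickClosure 𝓢 = Set.univ

/-!
Since `𝓡` is presilting, there are no nonzero maps from `𝓡[m]` to `𝓡[n]` when `m < n`. For
`X, X' ∈ 𝓡 ∗ 𝓡[1]`, the object `X'[i]` lies in `𝓡[i] ∗ 𝓡[i + 1]`. For `i ≥ 1` there are thus no
nonzero maps `𝓡 → X'[i]`, so every map `X → X'[i]` factors through `𝓡[1]`; taking `i = 1`,
`𝓡[1]`-rigid means rigid. For `i ≥ 2` there are no nonzero maps `𝓡[1] → X'[i]` either, so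
`Hom(X, X'[i]) = 0` and rigidity is all that presilting demands.
-/

section ShiftSet

variable {D : Type*} [Category D] [HasShift D ℤ]

lemma subset_shiftSet_zero (𝓢 : Set D) : 𝓢 ⊆ shiftSet 𝓢 0 :=
  fun S hS => ⟨S, hS, ⟨((shiftFunctorZero D ℤ).app S).symm⟩⟩

lemma shift_mem_shiftSet {𝓢 : Set D} {S : D} (hS : S ∈ 𝓢) (n : ℤ) : S⟦n⟧ ∈ shiftSet 𝓢 n :=
  ⟨S, hS, ⟨Iso.refl _⟩⟩

lemma shiftSet_shiftSet_subset (𝓢 : Set D) (m n : ℤ) :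
    shiftSet (shiftSet 𝓢 m) n ⊆ shiftSet 𝓢 (m + n) := by
  rintro Z ⟨Y, ⟨S, hS, ⟨eY⟩⟩, ⟨eZ⟩⟩
  exact ⟨S, hS, ⟨eZ ≪≫ (shiftFunctor D n).mapIso eY ≪≫ ((shiftFunctorAdd D m n).app S).symm⟩⟩

lemma IsPresilting.eq_zero_of_shiftSet [Preadditive D] {𝓢 : Set D} (h𝓢 : IsPresilting 𝓢)
    {m n : ℤ} (hmn : m < n) {X Y : D} (hX : X ∈ shiftSet 𝓢 m) (hY : Y ∈ shiftSet 𝓢 n)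
    (φ : X ⟶ Y) : φ = 0 := by
  obtain ⟨S, hS, ⟨eX⟩⟩ := hX
  obtain ⟨S', hS', ⟨eY⟩⟩ := hY
  let e : Y ≅ S'⟦n - m⟧⟦m⟧ := eY ≪≫ (shiftFunctorAdd' D (n - m) m n (sub_add_cancel n m)).app S'
  obtain ⟨ψ, hψ⟩ := (shiftFunctor D m).map_surjective (eX.inv ≫ φ ≫ e.hom)
  have hψ_zero : ψ = 0 := h𝓢 S hS S' hS' (n - m) (sub_pos.mpr hmn) ψ
  rw [← cancel_epi eX.inv, ← cancel_mono e.hom, Category.assoc, ← hψ, hψ_zero, Functor.map_zero,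
    comp_zero, zero_comp]

end ShiftSet

section StarSet

variable {𝓐 𝓑 : Set C} {M : C}

lemma shift_mem_starSet (hM : M ∈ starSet 𝓐 𝓑) (n : ℤ) :
    M⟦n⟧ ∈ starSet (shiftSet 𝓐 n) (shiftSet 𝓑 n) := by
  obtain ⟨A, hA, B, hB, f, g, h, hT⟩ := hM
  exact ⟨A⟦n⟧, shift_mem_shiftSet hA n, B⟦n⟧, shift_mem_shiftSet hB n, _, _, _,
    Triangle.shift_distinguished _ hT n⟩

lemma eq_zero_of_target_mem_starSet (hM : M ∈ starSet 𝓐 𝓑) {W : C}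
    (h𝓐 : ∀ A ∈ 𝓐, ∀ φ : W ⟶ A, φ = 0) (h𝓑 : ∀ B ∈ 𝓑, ∀ φ : W ⟶ B, φ = 0) (φ : W ⟶ M) :
    φ = 0 := by
  obtain ⟨A, hA, B, hB, f, g, h, hT⟩ := hM
  obtain ⟨ψ, rfl⟩ : ∃ ψ : W ⟶ A, φ = ψ ≫ f := Triangle.coyoneda_exact₂ _ hT φ (h𝓑 B hB _)
  rw [h𝓐 A hA ψ, zero_comp]

lemma exists_factorization_of_mem_starSet (hM : M ∈ starSet 𝓐 𝓑) {Y : C}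
    (h𝓐 : ∀ A ∈ 𝓐, ∀ φ : A ⟶ Y, φ = 0) (φ : M ⟶ Y) :
    ∃ B ∈ 𝓑, ∃ (g : M ⟶ B) (ψ : B ⟶ Y), φ = g ≫ ψ := by
  obtain ⟨A, hA, B, hB, f, g, h, hT⟩ := hM
  exact ⟨B, hB, g, Triangle.yoneda_exact₂ _ hT φ (h𝓐 A hA _)⟩

lemma inShiftIdeal_of_mem_starSet {𝓡 : Set C} (hM : M ∈ starSet 𝓐 (shiftSet 𝓡 1)) {Y : C}
    (h𝓐 : ∀ A ∈ 𝓐, ∀ φ : A ⟶ Y, φ = 0) (φ : M ⟶ Y) : InShiftIdeal 𝓡 φ := by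
  obtain ⟨B, ⟨R, hR, ⟨e⟩⟩, g, ψ, rfl⟩ := exists_factorization_of_mem_starSet hM h𝓐 φ
  exact ⟨R, hR, g ≫ e.hom, e.inv ≫ ψ, by simp⟩

end StarSet

section TwoTerm

variable {𝓡 : Set C} {X X' : C}

lemma IsPresilting.eq_zero_of_shiftSet_of_twoTerm (h𝓡 : IsPresilting 𝓡) {m i : ℤ} (hmi : m < i)
    (hX : X ∈ shiftSet 𝓡 m) (hX' : X' ∈ twoTerm 𝓡) (φ : X ⟶ X'⟦i⟧) : φ = 0 :=
  eq_zero_of_target_mem_starSet (shift_mem_starSet hX' i)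
    (fun _ hA => h𝓡.eq_zero_of_shiftSet hmi hX hA)
    (fun _ hB => h𝓡.eq_zero_of_shiftSet (by lia) hX (shiftSet_shiftSet_subset 𝓡 1 i hB)) φ

lemma IsPresilting.inShiftIdeal_of_twoTerm (h𝓡 : IsPresilting 𝓡) {i : ℤ} (hi : 0 < i)
    (hX : X ∈ twoTerm 𝓡) (hX' : X' ∈ twoTerm 𝓡) (φ : X ⟶ X'⟦i⟧) : InShiftIdeal 𝓡 φ :=
  inShiftIdeal_of_mem_starSet hX
    (fun _ hR => h𝓡.eq_zero_of_shiftSet_of_twoTerm hi (subset_shiftSet_zero 𝓡 hR) hX') φ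

lemma IsPresilting.eq_zero_of_twoTerm (h𝓡 : IsPresilting 𝓡) {i : ℤ} (hi : 1 < i)
    (hX : X ∈ twoTerm 𝓡) (hX' : X' ∈ twoTerm 𝓡) (φ : X ⟶ X'⟦i⟧) : φ = 0 := by
  obtain ⟨R, hR, a, b, rfl⟩ := h𝓡.inShiftIdeal_of_twoTerm (by lia) hX hX' φ
  rw [h𝓡.eq_zero_of_shiftSet_of_twoTerm hi (shift_mem_shiftSet hR 1) hX' b, comp_zero]

end TwoTerm

theorem relRigid_iff_rigid_iff_presilting_general {𝓡 𝓧 : Set C} (h𝓡 : IsPresilting 𝓡)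
    (h𝓧 : 𝓧 ⊆ twoTerm 𝓡) :
    (IsRelRigid 𝓡 𝓧 ↔ IsRigidSubcat 𝓧) ∧ (IsRigidSubcat 𝓧 ↔ IsPresilting 𝓧) := by
  refine ⟨⟨fun hrel X hX X' hX' φ => ?_, fun hrigid X hX X' hX' φ _ => hrigid X hX X' hX' φ⟩,
    ⟨fun hrigid X hX X' hX' i hi φ => ?_, fun hpre X hX X' hX' => hpre X hX X' hX' 1 one_pos⟩⟩
  · exact hrel X hX X' hX' φ (h𝓡.inShiftIdeal_of_twoTerm one_pos (h𝓧 hX) (h𝓧 hX') φ)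
  · obtain rfl | hi_gt : i = 1 ∨ 1 < i := by lia
    · exact hrigid X hX X' hX' φ
    · exact h𝓡.eq_zero_of_twoTerm hi_gt (h𝓧 hX) (h𝓧 hX') φ

/-- **Theorem (Statement 13).** Let `𝓡` be a presilting subcategory of `C` and
`𝓧 ⊆ 𝓡 ∗ 𝓡[1]` a subcategory. Then the following are equivalent:
(a) `𝓧` is `𝓡[1]`-rigid; (b) `𝓧` is rigid; (c) `𝓧` is presilting. -/
theorem relRigid_iff_rigid_iff_presilting
    (k : Type*) [Field k] [IsAlgClosed k] [Linear k C]
    [∀ X Y : C, FiniteDimensional k (X ⟶ Y)] [IsIdempotentComplete C]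
    (𝓡 𝓧 : Set C) (h𝓡sub : IsSubcat 𝓡) (h𝓡 : IsPresilting 𝓡)
    (h𝓧sub : IsSubcat 𝓧) (h𝓧tt : 𝓧 ⊆ twoTerm 𝓡) :
    (IsRelRigid 𝓡 𝓧 ↔ IsRigidSubcat 𝓧) ∧ (IsRigidSubcat 𝓧 ↔ IsPresilting 𝓧) :=
  relRigid_iff_rigid_iff_presilting_general h𝓡 h𝓧tt
end

section
/- Let R be a rigid subcategory of C, R₀ ∈ R and X ∈ R∗R[1]. If R₀ → X → M → R₀[1] is a triangle in C, then M ∈ R∗R[1]. -/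
/-!
Setting: `C` is a Hom-finite Krull–Schmidt `k`-linear triangulated category over an
algebraically closed field `k` (Krull–Schmidt is encoded as Hom-finiteness together with
idempotent completeness). Subcategories are identified with their classes of objects and
are always assumed full, closed under isomorphisms, direct sums and direct summands.
-/

open CategoryTheory CategoryTheory.Limits CategoryTheory.Pretriangulated Opposite

universe v u

variable {C : Type u} [Category.{v} C] [Preadditive C] [HasZeroObject C] [HasShift C ℤ]
  [∀ n : ℤ, (shiftFunctor C n).Additive] [Pretriangulated C]

/-!
Let `A ⟶ X ⟶ B⟦1⟧` with `A, B ∈ 𝓡` be a triangle presenting `X`. Since `Hom(R₀, B⟦1⟧) = 0`, the map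
`R₀ ⟶ X` factors through `A`, and the octahedral axiom would identify the cone `W` of
`A ⟶ X ⟶ M` with `N = B⟦1⟧ ⊞ R₀⟦1⟧`. That axiom can be avoided: there are maps `W ⟶ N ⟶ W` whose
composite agrees with `𝟙 W` after `W ⟶ A⟦1⟧`, so the difference factors through `M ⟶ W`, and
`M ⟶ W` itself factors through `N`. Hence `W` is a retract of `N ⊞ N`, so it lies in `𝓡[1]`.
-/

section Subcategories

variable {D E : Type*} [Category D] [Category E]

lemma IsRetractOf.map {X Y : D} (h : IsRetractOf Y X) (F : D ⥤ E) :
    IsRetractOf (F.obj Y) (F.obj X) := by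
  obtain ⟨s, r, hsr⟩ := h
  exact ⟨F.map s, F.map r, by rw [← F.map_comp, hsr, F.map_id]⟩

variable [Preadditive D] [Preadditive E]

lemma IsDirectSumOf.map {S X Y : D} (h : IsDirectSumOf S X Y) (F : D ⥤ E) [F.Additive] :
    IsDirectSumOf (F.obj S) (F.obj X) (F.obj Y) := by
  obtain ⟨i, j, p, q, hip, hjq, hiq, hjp, htotal⟩ := h
  refine ⟨F.map i, F.map j, F.map p, F.map q, ?_, ?_, ?_, ?_, ?_⟩ <;>
    simp only [← F.map_comp, ← F.map_add, hip, hjq, hiq, hjp, htotal, F.map_id, F.map_zero]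

lemma isDirectSumOf_biprod (X Y : D) [HasBinaryBiproduct X Y] : IsDirectSumOf (X ⊞ Y) X Y :=
  ⟨biprod.inl, biprod.inr, biprod.fst, biprod.snd, biprod.inl_fst, biprod.inr_snd,
    biprod.inl_snd, biprod.inr_fst, biprod.total⟩

lemma IsSubcat.biprod_mem {S : Set D} (hS : IsSubcat S) {X Y : D} [HasBinaryBiproduct X Y]
    (hX : X ∈ S) (hY : Y ∈ S) : (X ⊞ Y) ∈ S :=
  hS.2.1 hX hY (isDirectSumOf_biprod X Y)

variable [HasShift D ℤ]

lemma IsSubcat.mem_shiftSet_iff {S : Set D} (hS : IsSubcat S) {n : ℤ} {Y : D} :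
    Y ∈ shiftSet S n ↔ Y⟦-n⟧ ∈ S := by
  constructor
  · rintro ⟨X, hX, ⟨e⟩⟩
    exact hS.1 ((shiftFunctor D (-n)).mapIso e ≪≫ shiftShiftNeg X n).symm hX
  · exact fun hY => ⟨Y⟦-n⟧, hY, ⟨(shiftNegShift Y n).symm⟩⟩

lemma IsSubcat.shiftSet [∀ n : ℤ, (shiftFunctor D n).Additive] {S : Set D} (hS : IsSubcat S)
    (n : ℤ) : IsSubcat (shiftSet S n) := by
  refine ⟨?_, ?_, ?_⟩
  · rintro X Y e ⟨Z, hZ, ⟨e'⟩⟩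
    exact ⟨Z, hZ, ⟨e.symm ≪≫ e'⟩⟩
  · intro X Y T hX hY hT
    rw [hS.mem_shiftSet_iff] at hX hY ⊢
    exact hS.2.1 hX hY (hT.map (shiftFunctor D (-n)))
  · intro X Y hX hY
    rw [hS.mem_shiftSet_iff] at hX ⊢
    exact hS.2.2 hX (hY.map (shiftFunctor D (-n)))

end Subcategories

section Triangles

lemma obj₃_isRetractOf_biprod {T : Triangle C} (hT : T ∈ distTriang C) {N N' : C}
    {p : T.obj₃ ⟶ N} {i : N ⟶ T.obj₃} (hpi : p ≫ i ≫ T.mor₃ = T.mor₃)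
    {σ : T.obj₂ ⟶ N'} {τ : N' ⟶ T.obj₃} (hστ : σ ≫ τ = T.mor₂) :
    IsRetractOf T.obj₃ (N ⊞ N') := by
  obtain ⟨v, hv⟩ : ∃ v : T.obj₃ ⟶ T.obj₂, 𝟙 T.obj₃ - p ≫ i = v ≫ T.mor₂ :=
    Triangle.coyoneda_exact₃ T hT _ (by
      rw [Preadditive.sub_comp, Category.assoc, hpi, Category.id_comp, sub_self])
  refine ⟨biprod.lift p (v ≫ σ), biprod.desc i τ, ?_⟩
  rw [biprod.lift_desc, Category.assoc, hστ, ← hv, add_sub_cancel]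

lemma exists_eq_comp_shift_mor₁ {T : Triangle C} (hT : T ∈ distTriang C) {Y : C}
    (t : Y ⟶ T.obj₂⟦(1 : ℤ)⟧) (ht : t ≫ T.mor₂⟦(1 : ℤ)⟧' = 0) :
    ∃ q : Y ⟶ T.obj₁⟦(1 : ℤ)⟧, t = q ≫ T.mor₁⟦(1 : ℤ)⟧' := by
  obtain ⟨q, hq⟩ : ∃ q : Y ⟶ T.obj₁⟦(1 : ℤ)⟧, t = q ≫ (-T.mor₁⟦(1 : ℤ)⟧') :=
    Triangle.coyoneda_exact₁ T.rotate (rot_of_distTriang T hT) t ht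
  exact ⟨-q, by rw [hq, Preadditive.comp_neg, Preadditive.neg_comp]⟩

variable {A X B R M W : C}
  {f : A ⟶ X} {g : X ⟶ B} {h : B ⟶ A⟦(1 : ℤ)⟧}
  {a : R ⟶ X} {b : X ⟶ M} {c : M ⟶ R⟦(1 : ℤ)⟧}
  {w : M ⟶ W} {δ : W ⟶ A⟦(1 : ℤ)⟧}

lemma exists_cone_map_of_comp (hf : Triangle.mk f g h ∈ distTriang C)
    (hfb : Triangle.mk (f ≫ b) w δ ∈ distTriang C) :
    ∃ j : B ⟶ W, g ≫ j = b ≫ w ∧ j ≫ δ = h := by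
  obtain ⟨j, hgj, hjδ⟩ : ∃ j : B ⟶ W, g ≫ j = b ≫ w ∧ h ≫ (𝟙 A)⟦(1 : ℤ)⟧' = j ≫ δ :=
    complete_distinguished_triangle_morphism _ _ hf hfb (𝟙 A) b (Category.id_comp (f ≫ b)).symm
  exact ⟨j, hgj, by rw [← hjδ, CategoryTheory.Functor.map_id, Category.comp_id]⟩

lemma exists_lift_comp_desc_eq (ha : Triangle.mk a b c ∈ distTriang C) (hag : a ≫ g = 0)
    {j : B ⟶ W} (hj : g ≫ j = b ≫ w) :
    ∃ (ε : M ⟶ B) (γ : R⟦(1 : ℤ)⟧ ⟶ W), biprod.lift ε c ≫ biprod.desc j γ = w := by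
  obtain ⟨ε, hε⟩ : ∃ ε : M ⟶ B, g = b ≫ ε := Triangle.yoneda_exact₂ _ ha g hag
  obtain ⟨γ, hγ⟩ : ∃ γ : R⟦(1 : ℤ)⟧ ⟶ W, w - ε ≫ j = c ≫ γ :=
    Triangle.yoneda_exact₃ _ ha (w - ε ≫ j) (show b ≫ (w - ε ≫ j) = 0 by
      rw [Preadditive.comp_sub, ← Category.assoc, ← hε, hj, sub_self])
  exact ⟨ε, γ, by rw [biprod.lift_desc, ← hγ, add_sub_cancel]⟩

variable {a' : R ⟶ A}

lemma exists_comp_desc_shift_eq (hf : Triangle.mk f g h ∈ distTriang C)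
    (ha : Triangle.mk (a' ≫ f) b c ∈ distTriang C)
    (t : W ⟶ A⟦(1 : ℤ)⟧) (ht : t ≫ (f ≫ b)⟦(1 : ℤ)⟧' = 0) :
    ∃ p : W ⟶ B ⊞ R⟦(1 : ℤ)⟧, p ≫ biprod.desc h (a'⟦(1 : ℤ)⟧') = t := by
  obtain ⟨q, hq⟩ : ∃ q : W ⟶ R⟦(1 : ℤ)⟧, t ≫ f⟦(1 : ℤ)⟧' = q ≫ (a' ≫ f)⟦(1 : ℤ)⟧' :=
    exists_eq_comp_shift_mor₁ ha (t ≫ f⟦(1 : ℤ)⟧')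
      (show (t ≫ f⟦(1 : ℤ)⟧') ≫ b⟦(1 : ℤ)⟧' = 0 by
        rw [Category.assoc, ← Functor.map_comp, ht])
  obtain ⟨u, hu⟩ : ∃ u : W ⟶ B, t - q ≫ a'⟦(1 : ℤ)⟧' = u ≫ h :=
    Triangle.coyoneda_exact₁ _ hf (t - q ≫ a'⟦(1 : ℤ)⟧')
      (show (t - q ≫ a'⟦(1 : ℤ)⟧') ≫ f⟦(1 : ℤ)⟧' = 0 by
        rw [Preadditive.sub_comp, hq, Functor.map_comp, Category.assoc, sub_self])
  exact ⟨biprod.lift u q, by rw [biprod.lift_desc, ← hu, sub_add_cancel]⟩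

lemma isRetractOf_biprod_cone_comp (hf : Triangle.mk f g h ∈ distTriang C)
    (ha : Triangle.mk (a' ≫ f) b c ∈ distTriang C)
    (hfb : Triangle.mk (f ≫ b) w δ ∈ distTriang C) :
    IsRetractOf W ((B ⊞ R⟦(1 : ℤ)⟧) ⊞ (B ⊞ R⟦(1 : ℤ)⟧)) := by
  have hfg : f ≫ g = 0 := comp_distTriang_mor_zero₁₂ _ hf
  have hab : (a' ≫ f) ≫ b = 0 := comp_distTriang_mor_zero₁₂ _ ha
  have hδ : δ ≫ (f ≫ b)⟦(1 : ℤ)⟧' = 0 := comp_distTriang_mor_zero₃₁ _ hfb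
  obtain ⟨j, hgj, hjδ⟩ := exists_cone_map_of_comp hf hfb
  obtain ⟨s, hs⟩ : ∃ s : R⟦(1 : ℤ)⟧ ⟶ W, a'⟦(1 : ℤ)⟧' = s ≫ δ :=
    Triangle.coyoneda_exact₁ _ hfb (a'⟦(1 : ℤ)⟧')
      (show a'⟦(1 : ℤ)⟧' ≫ (f ≫ b)⟦(1 : ℤ)⟧' = 0 by
        rw [← Functor.map_comp, ← Category.assoc, hab, Functor.map_zero])
  obtain ⟨p, hp⟩ := exists_comp_desc_shift_eq hf ha δ hδ
  have hdesc : biprod.desc j s ≫ δ = biprod.desc h (a'⟦(1 : ℤ)⟧') := by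
    ext <;> simp [hjδ, hs]
  have hpδ : p ≫ biprod.desc j s ≫ δ = δ := by rw [hdesc, hp]
  obtain ⟨ε, γ, hw⟩ := exists_lift_comp_desc_eq ha (by rw [Category.assoc, hfg, comp_zero]) hgj
  exact obj₃_isRetractOf_biprod hfb hpδ hw

end Triangles

theorem cone_mem_starSet {𝓐 𝓢 : Set C} (h𝓢 : IsSubcat 𝓢) {R X M : C}
    (hR : R⟦(1 : ℤ)⟧ ∈ 𝓢) (hR𝓢 : ∀ S ∈ 𝓢, ∀ φ : R ⟶ S, φ = 0) (hX : X ∈ starSet 𝓐 𝓢)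
    {a : R ⟶ X} {b : X ⟶ M} {c : M ⟶ R⟦(1 : ℤ)⟧} (ha : Triangle.mk a b c ∈ distTriang C) :
    M ∈ starSet 𝓐 𝓢 := by
  obtain ⟨A, hA, B, hB, f, g, h, hf⟩ := hX
  obtain ⟨a', rfl⟩ : ∃ a' : R ⟶ A, a = a' ≫ f :=
    Triangle.coyoneda_exact₂ _ hf a (hR𝓢 B hB (a ≫ g))
  obtain ⟨W, w, δ, hfb⟩ := distinguished_cocone_triangle (f ≫ b)
  have hBR : (B ⊞ R⟦(1 : ℤ)⟧) ∈ 𝓢 := h𝓢.biprod_mem hB hR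
  have hW : W ∈ 𝓢 := h𝓢.2.2 (h𝓢.biprod_mem hBR hBR) (isRetractOf_biprod_cone_comp hf ha hfb)
  exact ⟨A, hA, W, hW, f ≫ b, w, δ, hfb⟩

theorem cone_mem_twoTerm_general {𝓡 : Set C} (h𝓡sub : IsSubcat 𝓡) {R₀ X M : C} (hR₀ : R₀ ∈ 𝓡)
    (hR₀𝓡 : ∀ R ∈ 𝓡, ∀ φ : R₀ ⟶ R⟦(1 : ℤ)⟧, φ = 0) (hX : X ∈ twoTerm 𝓡)
    {a : R₀ ⟶ X} {b : X ⟶ M} {c : M ⟶ R₀⟦(1 : ℤ)⟧} (ha : Triangle.mk a b c ∈ distTriang C) :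
    M ∈ twoTerm 𝓡 := by
  refine cone_mem_starSet (h𝓡sub.shiftSet 1) ⟨R₀, hR₀, ⟨Iso.refl _⟩⟩ ?_ hX ha
  rintro S ⟨R, hR, ⟨e⟩⟩ φ
  rw [← cancel_mono e.hom, hR₀𝓡 R hR (φ ≫ e.hom), zero_comp]

/-- **Lemma (Statement 16).** Let `𝓡` be a rigid subcategory of `C`, `R₀ ∈ 𝓡` and
`X ∈ 𝓡 ∗ 𝓡[1]`. If `R₀ → X → M → R₀⟦1⟧` is a triangle in `C`, then `M ∈ 𝓡 ∗ 𝓡[1]`. -/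
theorem cone_mem_twoTerm
    (k : Type*) [Field k] [IsAlgClosed k] [Linear k C]
    [∀ X Y : C, FiniteDimensional k (X ⟶ Y)] [IsIdempotentComplete C]
    (𝓡 : Set C) (h𝓡sub : IsSubcat 𝓡) (h𝓡 : IsRigidSubcat 𝓡)
    (R₀ X M : C) (hR₀ : R₀ ∈ 𝓡) (hX : X ∈ twoTerm 𝓡)
    (a : R₀ ⟶ X) (b : X ⟶ M) (c : M ⟶ R₀⟦(1:ℤ)⟧)
    (htri : Triangle.mk a b c ∈ distTriang C) :
    M ∈ twoTerm 𝓡 :=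
  cone_mem_twoTerm_general h𝓡sub hR₀ (h𝓡 R₀ hR₀) hX htri
end
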